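/- arXiv:0812.0165 — 2 statements merged into one kernel-verified Lean document; each statement's English description precedes it below -/
import Mathlib

section
/- Let h be an even Schwartz function and a, β, Λ > 0. Then ∑_{(n,m)∈ℤ²} 2n(n+1)·h((n+1/2)²(Λa)^{-2} + (m+1/2)²(Λβ)^{-2}) = ∑_{(n,m)∈ℤ²} (-1)^{n+m} ĝ(n,m), where g(u,v) = 2(u² − 1/4)·h(u²(Λa)^{-2} + v²(Λβ)^{-2}) and ĝ is the 2-dimensional Fourier transform ĝ(x,y) = ∫_{ℝ²} g(u,v) e^{-2πi(xu+yv)} du dv. -/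
open MeasureTheory Complex

section PoissonSummation

open scoped FourierTransform SchwartzMap

theorem summable_inv_one_add_sq_add_int (x : ℝ) :
    Summable fun n : ℤ => (1 + (x + n) ^ 2)⁻¹ := by
  have hs : Summable fun n : ℤ => (2 + 2 * x ^ 2) * |(n : ℝ)| ^ (-2 : ℝ) :=
    (Real.summable_abs_int_rpow one_lt_two).mul_left _
  refine Summable.of_norm_bounded_eventually hs ?_
  filter_upwards [Set.Finite.compl_mem_cofinite (Set.finite_singleton (0 : ℤ))] with n hn
  have hn' : (n : ℝ) ≠ 0 := by exact_mod_cast hn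
  rw [Real.rpow_neg (abs_nonneg _), Real.rpow_two, sq_abs, Real.norm_of_nonneg (by positivity),
    ← div_eq_mul_inv, inv_eq_one_div, div_le_div_iff₀ (by positivity) (by positivity)]
  nlinarith [sq_nonneg (2 * x + n), sq_nonneg (x * (x + n))]

/-- One-dimensional Poisson summation for functions with quadratic decay. -/
theorem Real.tsum_eq_tsum_fourier_of_le_inv_one_add_sq {f : ℝ → ℂ} (hc : Continuous f) {C : ℝ}
    (hf : ∀ x, ‖f x‖ ≤ C * (1 + x ^ 2)⁻¹) (hs : Summable fun n : ℤ => 𝓕 f n) (x : ℝ) :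
    ∑' n : ℤ, f (x + n) = ∑' n : ℤ, 𝓕 f n * fourier n (x : UnitAddCircle) := by
  have hC : 0 ≤ C := by simpa using (norm_nonneg _).trans (hf 0)
  refine Real.tsum_eq_tsum_fourier_of_rpow_decay_of_summable hc one_lt_two
    (Asymptotics.IsBigO.of_bound C ?_) hs x
  have h0 : ({0}ᶜ : Set ℝ) ∈ Filter.cocompact ℝ := isCompact_singleton.compl_mem_cocompact
  filter_upwards [h0] with u hu
  have hu' : u ≠ 0 := hu
  have hu2 : 0 < u ^ 2 := by positivity
  refine (hf u).trans ?_
  rw [Real.rpow_neg (abs_nonneg _), Real.rpow_two, sq_abs, Real.norm_of_nonneg (by positivity)]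
  gcongr
  linarith

theorem Real.norm_fourier_le_integral_norm (f : ℝ → ℂ) (w : ℝ) : ‖𝓕 f w‖ ≤ ∫ v, ‖f v‖ :=
  VectorFourier.norm_fourierIntegral_le_integral_norm _ _ _ _ _

theorem norm_fourier_apply (n : ℤ) (x : UnitAddCircle) : ‖fourier n x‖ = 1 :=
  Circle.norm_coe _

section Iterated

variable {g : ℝ → ℝ → ℂ} {C : ℝ}

theorem norm_fourier_le_of_le_inv_one_add_sq
    (hg : ∀ u v, ‖g u v‖ ≤ C * ((1 + u ^ 2)⁻¹ * (1 + v ^ 2)⁻¹))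
    (u w : ℝ) :
    ‖𝓕 (g u) w‖ ≤ (C * ∫ v : ℝ, (1 + v ^ 2)⁻¹) * (1 + u ^ 2)⁻¹ := by
  refine (Real.norm_fourier_le_integral_norm _ _).trans ?_
  have : (C * ∫ v : ℝ, (1 + v ^ 2)⁻¹) * (1 + u ^ 2)⁻¹ =
      ∫ v : ℝ, C * ((1 + u ^ 2)⁻¹ * (1 + v ^ 2)⁻¹) := by
    rw [integral_const_mul, integral_const_mul]; ring
  rw [this]
  exact integral_mono_of_nonneg (.of_forall fun _ => norm_nonneg _)
    ((integrable_inv_one_add_sq.const_mul _).const_mul _) (.of_forall (hg u))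

theorem continuous_fourier_right (hc : Continuous (Function.uncurry g))
    (hg : ∀ u v, ‖g u v‖ ≤ C * ((1 + u ^ 2)⁻¹ * (1 + v ^ 2)⁻¹)) (w : ℝ) :
    Continuous fun u => 𝓕 (g u) w := by
  have hC : 0 ≤ C := by simpa using (norm_nonneg _).trans (hg 0 0)
  simp_rw [Real.fourier_eq']
  refine continuous_of_dominated (bound := fun v => C * (1 + v ^ 2)⁻¹) (fun u => ?_)
    (fun u => .of_forall fun v => ?_) (integrable_inv_one_add_sq.const_mul _)
    (.of_forall fun v => ?_)
  · have : Continuous (g u) := hc.comp (Continuous.prodMk_right u)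
    exact Continuous.aestronglyMeasurable (by fun_prop)
  · rw [norm_smul, norm_exp_ofReal_mul_I, one_mul]
    refine (hg u v).trans ?_
    gcongr
    exact mul_le_of_le_one_left (by positivity) (inv_le_one_of_one_le₀ (by nlinarith [sq_nonneg u]))
  · exact (hc.comp (Continuous.prodMk_left v)).const_smul (cexp (↑(-2 * Real.pi * inner ℝ v w) * I))

/-- Two-dimensional Poisson summation, with the Fourier transform written as an iterated one. -/
theorem tsum_int_prod_eq_tsum_fourier_fourier (hc : Continuous (Function.uncurry g))
    (hg : ∀ u v, ‖g u v‖ ≤ C * ((1 + u ^ 2)⁻¹ * (1 + v ^ 2)⁻¹))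
    (hs : Summable fun p : ℤ × ℤ => 𝓕 (fun u => 𝓕 (g u) p.2) p.1) (x y : ℝ) :
    ∑' p : ℤ × ℤ, g (x + p.1) (y + p.2) =
      ∑' p : ℤ × ℤ, 𝓕 (fun u => 𝓕 (g u) p.2) p.1 *
        (fourier p.1 (x : UnitAddCircle) * fourier p.2 (y : UnitAddCircle)) := by
  have hC : 0 ≤ C := by simpa using (norm_nonneg _).trans (hg 0 0)
  have hcu (u : ℝ) : Continuous (g u) := hc.comp (Continuous.prodMk_right u)
  have hx := summable_inv_one_add_sq_add_int x
  have hle (v : ℝ) : (1 + v ^ 2)⁻¹ ≤ 1 := inv_le_one_of_one_le₀ (by nlinarith [sq_nonneg v])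
  have hsg : Summable fun p : ℤ × ℤ => g (x + p.1) (y + p.2) :=
    .of_norm_bounded (((hx.mul_of_nonneg (summable_inv_one_add_sq_add_int y)
      (fun _ => by positivity) (fun _ => by positivity))).mul_left C) fun p => hg _ _
  have hsF : Summable fun p : ℤ × ℤ => 𝓕 (fun u => 𝓕 (g u) p.2) p.1 *
      (fourier p.1 (x : UnitAddCircle) * fourier p.2 (y : UnitAddCircle)) :=
    .of_norm_bounded hs.norm fun p => by
      simp only [norm_mul, norm_fourier_apply, mul_one, le_refl]
  set S : ℝ → ℂ := fun v => ∑' n : ℤ, g (x + n) v with hS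
  have hSc : Continuous S := by
    refine continuous_tsum (fun n => hcu _) (hx.mul_left C) fun n v => (hg _ v).trans ?_
    gcongr
    exact mul_le_of_le_one_right (by positivity) (hle v)
  have hSb (v : ℝ) : ‖S v‖ ≤ (C * ∑' n : ℤ, (1 + (x + n) ^ 2)⁻¹) * (1 + v ^ 2)⁻¹ :=
    tsum_of_norm_bounded ((hx.hasSum.mul_left C).mul_right _) fun n => by
      simpa only [mul_assoc] using hg (x + n) v
  have hgint (u : ℝ) : Integrable (g u) :=
    ((integrable_inv_one_add_sq.const_mul _).const_mul _).mono' (hcu u).aestronglyMeasurable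
      (.of_forall (hg u))
  have hFS (m : ℤ) : 𝓕 S m = ∑' n : ℤ, 𝓕 (fun u => 𝓕 (g u) m) n *
      fourier n (x : UnitAddCircle) := by
    rw [← Real.tsum_eq_tsum_fourier_of_le_inv_one_add_sq (continuous_fourier_right hc hg m)
      (norm_fourier_le_of_le_inv_one_add_sq hg · m) (hs.prod_symm.prod_factor m)]
    simp_rw [Real.fourier_eq']
    have hn (n : ℤ) (v : ℝ) : ‖cexp (↑(-2 * Real.pi * inner ℝ v (m : ℝ)) * I) • g (x + n) v‖ =
        ‖g (x + n) v‖ := by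
      rw [norm_smul, norm_exp_ofReal_mul_I, one_mul]
    rw [(hasSum_integral_of_summable_integral_norm ?_ ?_).tsum_eq]
    · simp only [hS, smul_eq_mul, tsum_mul_left]
    · intro n
      refine (hgint (x + n)).mono (Continuous.aestronglyMeasurable ?_)
        (.of_forall fun v => (hn n v).le)
      have := hcu (x + n)
      fun_prop
    · simp_rw [hn]
      refine .of_nonneg_of_le (fun n => integral_nonneg fun v => norm_nonneg _) (fun n => ?_)
        ((hx.mul_right (∫ v : ℝ, (1 + v ^ 2)⁻¹)).mul_left C)
      rw [← integral_const_mul, ← integral_const_mul]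
      exact integral_mono (hgint _).norm
        ((integrable_inv_one_add_sq.const_mul _).const_mul _) (hg _)
  have hsS : Summable fun m : ℤ => 𝓕 S m := by
    simp_rw [hFS]
    refine Summable.prod (f := fun p : ℤ × ℤ => 𝓕 (fun u => 𝓕 (g u) p.1) p.2 *
      fourier p.2 (x : UnitAddCircle)) ?_
    exact .of_norm_bounded hs.prod_symm.norm fun p => by
      simp only [norm_mul, norm_fourier_apply, mul_one, Prod.fst_swap, Prod.snd_swap, le_refl]
  calc ∑' p : ℤ × ℤ, g (x + p.1) (y + p.2) = ∑' m : ℤ, S (y + m) := by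
        rw [hsg.tsum_prod, ← Summable.tsum_comm (f := fun n m : ℤ => g (x + n) (y + m)) hsg]
    _ = ∑' m : ℤ, 𝓕 S m * fourier m (y : UnitAddCircle) :=
        Real.tsum_eq_tsum_fourier_of_le_inv_one_add_sq hSc hSb hsS y
    _ = ∑' m : ℤ, ∑' n : ℤ, 𝓕 (fun u => 𝓕 (g u) m) n *
          (fourier n (x : UnitAddCircle) * fourier m (y : UnitAddCircle)) := by
        simp_rw [hFS, ← tsum_mul_right, mul_assoc]
    _ = _ := by
        rw [hsF.tsum_prod]
        exact Summable.tsum_comm (f := fun n m : ℤ => 𝓕 (fun u => 𝓕 (g u) m) n *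
          (fourier n (x : UnitAddCircle) * fourier m (y : UnitAddCircle))) hsF

end Iterated

namespace SchwartzMap

theorem exists_norm_le_inv_one_add_sq_mul (f : 𝓢(WithLp 2 (ℝ × ℝ), ℂ)) :
    ∃ C : ℝ, ∀ u v : ℝ, ‖f (WithLp.toLp 2 (u, v))‖ ≤ C * ((1 + u ^ 2)⁻¹ * (1 + v ^ 2)⁻¹) := by
  refine ⟨2 ^ 4 * (Finset.Iic (4, 0)).sup (fun m => SchwartzMap.seminorm ℝ m.1 m.2) f,
    fun u v => ?_⟩
  rw [← mul_inv, ← div_eq_mul_inv, le_div_iff₀ (by positivity), mul_comm]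
  refine le_trans ?_ (one_add_le_sup_seminorm_apply (𝕜 := ℝ) (m := (4, 0)) le_rfl le_rfl f
    (WithLp.toLp 2 (u, v)))
  rw [norm_iteratedFDeriv_zero]
  gcongr
  have h : ‖WithLp.toLp 2 (u, v)‖ ^ 2 = u ^ 2 + v ^ 2 := by
    simp [WithLp.prod_norm_sq_eq_of_L2]
  have h0 := norm_nonneg (WithLp.toLp 2 (u, v))
  set r := ‖WithLp.toLp 2 (u, v)‖
  calc (1 + u ^ 2) * (1 + v ^ 2) ≤ (1 + r ^ 2) * (1 + r ^ 2) := by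
        rw [h]; gcongr <;> linarith [sq_nonneg u, sq_nonneg v]
    _ ≤ (1 + r) ^ 2 * (1 + r) ^ 2 := by gcongr <;> nlinarith
    _ = (1 + r) ^ 4 := by ring

theorem fourier_prod_eq (f : 𝓢(WithLp 2 (ℝ × ℝ), ℂ)) (x y : ℝ) :
    𝓕 f (WithLp.toLp 2 (x, y)) = 𝓕 (fun u => 𝓕 (fun v => f (WithLp.toLp 2 (u, v))) y) x := by
  have hmp := WithLp.volume_preserving_toLp ℝ ℝ
  have hme : MeasurableEmbedding (WithLp.toLp 2 : ℝ × ℝ → WithLp 2 (ℝ × ℝ)) :=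
    (MeasurableEquiv.toLp 2 (ℝ × ℝ)).measurableEmbedding
  have hint : Integrable fun p : ℝ × ℝ => f (WithLp.toLp 2 p) :=
    (hmp.integrable_comp_emb hme).2 f.integrable
  rw [fourier_coe, Real.fourier_eq', ← hmp.integral_comp hme, Measure.volume_eq_prod, integral_prod]
  · simp_rw [Real.fourier_eq', ← integral_smul, smul_smul, ← Complex.exp_add, ← add_mul,
      ← ofReal_add, ← mul_add, WithLp.prod_inner_apply]
  · rw [← Measure.volume_eq_prod]
    refine hint.mono (Continuous.aestronglyMeasurable ?_) (.of_forall fun v => ?_)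
    · have := f.continuous
      have := WithLp.prod_continuous_toLp 2 ℝ ℝ
      fun_prop
    · rw [norm_smul, norm_exp_ofReal_mul_I, one_mul]

theorem tsum_int_prod_eq_tsum_fourier (f : 𝓢(WithLp 2 (ℝ × ℝ), ℂ)) (x y : ℝ) :
    ∑' p : ℤ × ℤ, f (WithLp.toLp 2 (x + p.1, y + p.2)) =
      ∑' p : ℤ × ℤ, 𝓕 (fun u => 𝓕 (fun v => f (WithLp.toLp 2 (u, v))) p.2) p.1 *
        (fourier p.1 (x : UnitAddCircle) * fourier p.2 (y : UnitAddCircle)) := by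
  obtain ⟨C, hC⟩ := f.exists_norm_le_inv_one_add_sq_mul
  obtain ⟨D, hD⟩ := (𝓕 f).exists_norm_le_inv_one_add_sq_mul
  have hw : Summable fun n : ℤ => (1 + (n : ℝ) ^ 2)⁻¹ := by
    simpa using summable_inv_one_add_sq_add_int 0
  refine tsum_int_prod_eq_tsum_fourier_fourier (g := fun u v => f (WithLp.toLp 2 (u, v)))
    (f.continuous.comp (WithLp.prod_continuous_toLp 2 ℝ ℝ)) hC ?_ x y
  simp_rw [← fourier_prod_eq]
  exact .of_norm_bounded ((hw.mul_of_nonneg hw (fun _ => by positivity)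
    fun _ => by positivity).mul_left D) fun p => hD _ _

/-- The Schwartz function `(u, v) ↦ 2 (u² - 1/4) h (A u² + B v²)`. -/
theorem exists_eq_mul_comp_quadratic (h : 𝓢(ℝ, ℂ)) {A B : ℝ} (hA : 0 < A) (hB : 0 < B) :
    ∃ f : 𝓢(WithLp 2 (ℝ × ℝ), ℂ), ∀ u v : ℝ,
      f (WithLp.toLp 2 (u, v)) = 2 * ((u : ℂ) ^ 2 - 1 / 4) * h (u ^ 2 * A + v ^ 2 * B) := by
  have h1 : Function.HasTemperateGrowth fun p : WithLp 2 (ℝ × ℝ) => p.fst :=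
    (WithLp.fstL 2 ℝ ℝ ℝ).hasTemperateGrowth
  have h2 : Function.HasTemperateGrowth fun p : WithLp 2 (ℝ × ℝ) => p.snd :=
    (WithLp.sndL 2 ℝ ℝ ℝ).hasTemperateGrowth
  have hq : Function.HasTemperateGrowth
      fun p : WithLp 2 (ℝ × ℝ) => p.fst ^ 2 * A + p.snd ^ 2 * B :=
    ((h1.pow 2).mul (.const A)).add ((h2.pow 2).mul (.const B))
  have hp : Function.HasTemperateGrowth
      fun p : WithLp 2 (ℝ × ℝ) => 2 * ((p.fst : ℂ) ^ 2 - 1 / 4) :=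
    (Function.HasTemperateGrowth.const 2).mul
      (((Function.HasTemperateGrowth.comp Function.Complex.hasTemperateGrowth_ofReal h1).pow 2).sub
        (.const (1 / 4)))
  have hup : ∃ (k : ℕ) (C : ℝ), ∀ p : WithLp 2 (ℝ × ℝ),
      ‖p‖ ≤ C * (1 + ‖p.fst ^ 2 * A + p.snd ^ 2 * B‖) ^ k := by
    refine ⟨1, 1 + A⁻¹ + B⁻¹, fun p => ?_⟩
    have hn := WithLp.prod_norm_sq_eq_of_L2 p
    simp only [Real.norm_eq_abs, sq_abs] at hn
    have hs : 0 ≤ p.fst ^ 2 * A := by positivity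
    have ht : 0 ≤ p.snd ^ 2 * B := by positivity
    rw [pow_one, Real.norm_of_nonneg (add_nonneg hs ht)]
    calc ‖p‖ ≤ 1 + ‖p‖ ^ 2 := by nlinarith [sq_nonneg (‖p‖ - 1)]
      _ = 1 + A⁻¹ * (p.fst ^ 2 * A) + B⁻¹ * (p.snd ^ 2 * B) := by rw [hn]; field_simp; ring
      _ ≤ (1 + A⁻¹ + B⁻¹) * 1 + (1 + A⁻¹ + B⁻¹) * (p.fst ^ 2 * A) +
          (1 + A⁻¹ + B⁻¹) * (p.snd ^ 2 * B) := by
        have hA' : 0 < A⁻¹ := by positivity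
        have hB' : 0 < B⁻¹ := by positivity
        gcongr <;> linarith
      _ = _ := by ring
  refine ⟨smulLeftCLM ℂ (fun p : WithLp 2 (ℝ × ℝ) => 2 * ((p.fst : ℂ) ^ 2 - 1 / 4))
    (compCLM ℝ hq hup h), fun u v => ?_⟩
  rw [smulLeftCLM_apply_apply hp]
  rfl

end SchwartzMap

theorem fourier_half (n : ℤ) : fourier n ((1 / 2 : ℝ) : UnitAddCircle) = (-1 : ℂ) ^ n := by
  rw [fourier_coe_apply, ← exp_pi_mul_I, ← exp_int_mul]
  push_cast
  ring_nf

end PoissonSummation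

/-- 2-dimensional Poisson summation applied to the spectral action on
`S³_a × S¹_β`: with `g(u,v) = 2(u² - 1/4) h(u²(Λa)⁻² + v²(Λβ)⁻²)`,
`∑_{(n,m)∈ℤ²} g(n+1/2, m+1/2) = ∑_{(n,m)∈ℤ²} (-1)^{n+m} ĝ(n,m)`. -/
theorem poisson_S3xS1 (h : SchwartzMap ℝ ℂ) (hh : ∀ x : ℝ, h (-x) = h x)
    (a β Λ : ℝ) (ha : 0 < a) (hβ : 0 < β) (hΛ : 0 < Λ) :
    ∑' p : ℤ × ℤ, 2 * (p.1 : ℂ) * ((p.1 : ℂ) + 1) *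
        h (((p.1 : ℝ) + 1 / 2) ^ 2 * (Λ * a) ^ (-2 : ℤ)
            + ((p.2 : ℝ) + 1 / 2) ^ 2 * (Λ * β) ^ (-2 : ℤ)) =
      ∑' p : ℤ × ℤ, (-1 : ℂ) ^ (p.1 + p.2) *
        ∫ u : ℝ, ∫ v : ℝ,
          2 * ((u : ℂ) ^ 2 - 1 / 4) *
            h (u ^ 2 * (Λ * a) ^ (-2 : ℤ) + v ^ 2 * (Λ * β) ^ (-2 : ℤ)) *
            Complex.exp (-2 * Real.pi * Complex.I * ((p.1 : ℂ) * u + (p.2 : ℂ) * v)) := by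
  have hA : 0 < (Λ * a) ^ (-2 : ℤ) := by positivity
  have hB : 0 < (Λ * β) ^ (-2 : ℤ) := by positivity
  obtain ⟨f, hf⟩ := h.exists_eq_mul_comp_quadratic hA hB
  have key := f.tsum_int_prod_eq_tsum_fourier (1 / 2) (1 / 2)
  simp_rw [hf, fourier_half] at key
  convert key using 3 with p p
  · rw [add_comm (1 / 2 : ℝ), add_comm (1 / 2 : ℝ)]
    push_cast
    ring
  · rw [mul_comm, ← zpow_add₀ (by norm_num)]
    congr 1
    simp_rw [Real.fourier_eq', ← integral_smul]
    congr! 4 with u v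
    rw [smul_smul, ← Complex.exp_add, smul_eq_mul, mul_comm]
    congr 2
    simp only [RCLike.inner_apply, conj_trivial]
    push_cast
    ring
end

section
/- Let h be a Schwartz function on ℝ. Then for S³_a × S¹_β there exist, for every k > 0, constants such that Tr(h(D²/Λ²)) = 2πΛ⁴βa³ ∫_0^∞ h(ρ²)ρ³ dρ − πΛ²βa ∫_0^∞ h(ρ²)ρ dρ + ε(Λ) with |ε(Λ)| = O(Λ^{-k}) as Λ → ∞. -/
open MeasureTheory
open scoped SchwartzMap LineDeriv FourierTransform

/-- Restriction of a Schwartz function to the line `t ↦ p + t • v`. -/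
noncomputable def SchwartzMap.restrictLine {E : Type*} [NormedAddCommGroup E] [NormedSpace ℝ E]
    (F : 𝓢(E, ℂ)) (p : E) {v : E} (hv : v ≠ 0) : 𝓢(ℝ, ℂ) :=
  SchwartzMap.compCLMOfAntilipschitz ℂ (K := ‖v‖₊⁻¹) (g := fun t : ℝ ↦ p + t • v)
    (by fun_prop)
    (by
      refine AntilipschitzWith.of_le_mul_dist fun s t ↦ le_of_eq ?_
      have : ‖v‖ ≠ 0 := norm_ne_zero_iff.mpr hv
      rw [dist_add_left, dist_eq_norm, dist_eq_norm, ← sub_smul, norm_smul]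
      simp only [NNReal.coe_inv, coe_nnnorm]
      field_simp) F

section RestrictLine

variable {E : Type*} [NormedAddCommGroup E] [NormedSpace ℝ E]

@[simp]
lemma SchwartzMap.restrictLine_apply (F : 𝓢(E, ℂ)) (p : E) {v : E} (hv : v ≠ 0) (t : ℝ) :
    F.restrictLine p hv t = F (p + t • v) := rfl

lemma SchwartzMap.lineDerivOp_restrictLine (F : 𝓢(E, ℂ)) (p : E) {v : E} (hv : v ≠ 0) :
    ∂_{(1 : ℝ)} (F.restrictLine p hv) = (∂_{v} F).restrictLine p hv := by
  ext t
  have hg : HasDerivAt (fun t : ℝ ↦ p + t • v) v t := by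
    simpa using ((hasDerivAt_id t).smul_const v).const_add p
  have h := (F.hasFDerivAt (x := p + t • v)).comp_hasDerivAt t hg
  rw [SchwartzMap.lineDerivOp_apply_eq_fderiv, SchwartzMap.restrictLine_apply,
    SchwartzMap.lineDerivOp_apply_eq_fderiv, ← h.deriv]
  rfl

lemma SchwartzMap.iterate_lineDerivOp_restrictLine (N : ℕ) (F : 𝓢(E, ℂ)) (p : E) {v : E}
    (hv : v ≠ 0) :
    (fun g : 𝓢(ℝ, ℂ) ↦ ∂_{(1 : ℝ)} g)^[N] (F.restrictLine p hv) =
      ((fun G : 𝓢(E, ℂ) ↦ ∂_{v} G)^[N] F).restrictLine p hv := by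
  induction N generalizing F with
  | zero => rfl
  | succ N ih => rw [Function.iterate_succ_apply, Function.iterate_succ_apply,
      SchwartzMap.lineDerivOp_restrictLine, ih]

lemma SchwartzMap.iterate_lineDerivOp_smul (N : ℕ) (c : ℝ) (v : E) (F : 𝓢(E, ℂ)) :
    (fun G : 𝓢(E, ℂ) ↦ ∂_{c • v} G)^[N] F = c ^ N • (fun G : 𝓢(E, ℂ) ↦ ∂_{v} G)^[N] F := by
  induction N with
  | zero => simp
  | succ N ih =>
    rw [Function.iterate_succ_apply', Function.iterate_succ_apply', ih,
      LineDeriv.lineDerivOp_left_smul, LineDeriv.lineDerivOp_smul, smul_smul, pow_succ']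

end RestrictLine

lemma SchwartzMap.fourier_iterate_lineDerivOp (N : ℕ) (g : 𝓢(ℝ, ℂ)) (ξ : ℝ) :
    𝓕 ((fun f : 𝓢(ℝ, ℂ) ↦ ∂_{(1 : ℝ)} f)^[N] g) ξ =
      (2 * Real.pi * Complex.I * ξ) ^ N * 𝓕 g ξ := by
  induction N generalizing g with
  | zero => simp
  | succ N ih =>
    rw [Function.iterate_succ_apply, ih, SchwartzMap.fourier_lineDerivOp_eq]
    have : (fun x : ℝ ↦ inner ℝ x (1:ℝ)).HasTemperateGrowth := by fun_prop
    rw [_root_.smul_apply, SchwartzMap.smulLeftCLM_apply_apply this]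
    simp only [inner, smul_eq_mul, Complex.real_smul]
    simp
    ring

lemma SchwartzMap.norm_fourier_int_le (N : ℕ) (g : 𝓢(ℝ, ℂ)) {n : ℤ} (hn : n ≠ 0) :
    ‖𝓕 g n‖ ≤ |1 / (n : ℝ) ^ N| * ∫ t, ‖(fun f : 𝓢(ℝ, ℂ) ↦ ∂_{(1 : ℝ)} f)^[N] g t‖ := by
  set G := (fun f : 𝓢(ℝ, ℂ) ↦ ∂_{(1 : ℝ)} f)^[N] g
  have h1 : ‖𝓕 G n‖ ≤ ∫ t, ‖G t‖ := by
    rw [SchwartzMap.fourier_coe]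
    exact VectorFourier.norm_fourierIntegral_le_integral_norm ..
  rw [SchwartzMap.fourier_iterate_lineDerivOp] at h1
  have hn' : 0 < |(n : ℝ)| := by positivity
  have h2 : |(n : ℝ)| ^ N ≤ ‖(2 * Real.pi * Complex.I * ((n : ℝ) : ℂ)) ^ N‖ := by
    rw [norm_pow]
    gcongr
    simp only [norm_mul, Complex.norm_I, Complex.norm_real, Real.norm_eq_abs, mul_one,
      Complex.norm_ofNat, abs_of_pos Real.pi_pos]
    nlinarith [Real.pi_gt_three]
  rw [abs_div, abs_pow, abs_one, one_div_mul_eq_div, le_div_iff₀ (by positivity), mul_comm]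
  refine le_trans ?_ h1
  rw [norm_mul]
  gcongr

/-- Poisson summation over the half-integers: the sum is the integral up to
an `L¹` norm of an arbitrarily high derivative. -/
lemma SchwartzMap.norm_tsum_half_int_sub_integral_le {N : ℕ} (hN : 1 < N) (g : 𝓢(ℝ, ℂ)) :
    ‖∑' n : ℤ, g (n + 1 / 2) - ∫ t, g t‖ ≤
      (∑' n : ℤ, |1 / (n : ℝ) ^ N|) *
        ∫ t, ‖(fun f : 𝓢(ℝ, ℂ) ↦ ∂_{(1 : ℝ)} f)^[N] g t‖ := by
  have hsum : Summable fun n : ℤ ↦ |1 / (n : ℝ) ^ N| :=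
    (Real.summable_one_div_int_pow.mpr hN).abs
  set J := ∫ t, ‖(fun f : 𝓢(ℝ, ℂ) ↦ ∂_{(1 : ℝ)} f)^[N] g t‖
  set u : ℤ → ℂ := fun n ↦ 𝓕 g n * fourier n (((1 / 2 : ℝ) : ℝ) : UnitAddCircle)
  have hP : ∑' n : ℤ, g (n + 1 / 2) = ∑' n, u n := by
    rw [← SchwartzMap.tsum_eq_tsum_fourier]
    simp_rw [add_comm]
  have hb (n : ℤ) (hn : n ≠ 0) : ‖u n‖ ≤ |1 / (n : ℝ) ^ N| * J := by
    simpa only [u, norm_mul, fourier_apply, Circle.norm_coe, mul_one] using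
      SchwartzMap.norm_fourier_int_le N g hn
  have hu : Summable u := by
    refine (hsum.mul_right J).of_norm_bounded_eventually ?_
    exact (Set.finite_singleton (0 : ℤ)).subset fun n hn ↦ by
      by_contra h
      exact hn (hb n h)
  have hu0 : u 0 = ∫ t, g t := by
    simp [u, SchwartzMap.fourier_coe, Real.fourier_eq]
  rw [hP, hu.tsum_eq_add_tsum_ite 0, hu0, add_sub_cancel_left, ← tsum_mul_right]
  refine tsum_of_norm_bounded (hsum.mul_right J).hasSum fun n ↦ ?_
  split_ifs with h
  · simp only [norm_zero]; positivity
  · exact hb n h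

lemma SchwartzMap.norm_tsum_line_sub_integral_le {E : Type*} [NormedAddCommGroup E]
    [NormedSpace ℝ E] {N : ℕ} (hN : 1 < N) (F : 𝓢(E, ℂ)) (p : E) {v : E} (hv : v ≠ 0) {A : ℝ}
    (hA : 0 < A) :
    ‖∑' n : ℤ, F (p + ((n + 1 / 2 : ℝ) / A) • v) - A * ∫ t : ℝ, F (p + t • v)‖ ≤
      (∑' n : ℤ, |1 / (n : ℝ) ^ N|) * (A * A⁻¹ ^ N) *
        ∫ t : ℝ, ‖(fun G : 𝓢(E, ℂ) ↦ ∂_{v} G)^[N] F (p + t • v)‖ := by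
  have hv' : A⁻¹ • v ≠ 0 := smul_ne_zero (by positivity) hv
  have h := SchwartzMap.norm_tsum_half_int_sub_integral_le hN (F.restrictLine p hv')
  rw [SchwartzMap.iterate_lineDerivOp_restrictLine, SchwartzMap.iterate_lineDerivOp_smul] at h
  simp only [SchwartzMap.restrictLine_apply, smul_smul, ← div_eq_mul_inv,
    _root_.smul_apply, norm_smul] at h
  rw [integral_const_mul, Measure.integral_comp_div (fun t : ℝ ↦ F (p + t • v)),
    Measure.integral_comp_div
      (fun t : ℝ ↦ ‖(fun G : 𝓢(E, ℂ) ↦ ∂_{v} G)^[N] F (p + t • v)‖), abs_of_pos hA] at h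
  rw [norm_pow, Real.norm_of_nonneg (by positivity)] at h
  simp only [Complex.real_smul, smul_eq_mul] at h
  convert h using 1
  ring

/-- A Schwartz function on the plane is dominated by a product of Cauchy densities. -/
lemma SchwartzMap.exists_norm_le_mul_inv_one_add_sq (F : 𝓢(ℝ × ℝ, ℂ)) :
    ∃ C : ℝ, 0 ≤ C ∧ ∀ x y : ℝ, ‖F (x, y)‖ ≤ C * ((1 + x ^ 2)⁻¹ * (1 + y ^ 2)⁻¹) := by
  refine ⟨2 ^ 4 * (Finset.Iic (4, 0)).sup (fun m ↦ SchwartzMap.seminorm ℝ m.1 m.2) F,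
    by positivity, fun x y ↦ ?_⟩
  have h := SchwartzMap.one_add_le_sup_seminorm_apply (𝕜 := ℝ) (m := (4, 0)) le_rfl le_rfl F (x, y)
  rw [norm_iteratedFDeriv_zero] at h
  rw [← mul_inv, ← div_eq_mul_inv, le_div_iff₀ (by positivity), mul_comm]
  refine le_trans ?_ h
  gcongr
  have hx : |x| ≤ ‖(x, y)‖ := norm_fst_le (x, y)
  have hy : |y| ≤ ‖(x, y)‖ := norm_snd_le (x, y)
  have hx' : 1 + x ^ 2 ≤ (1 + ‖(x, y)‖) ^ 2 := by
    nlinarith [sq_abs x, abs_nonneg x]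
  have hy' : 1 + y ^ 2 ≤ (1 + ‖(x, y)‖) ^ 2 := by
    nlinarith [sq_abs y, abs_nonneg y]
  calc (1 + x ^ 2) * (1 + y ^ 2) ≤ (1 + ‖(x, y)‖) ^ 2 * (1 + ‖(x, y)‖) ^ 2 := by gcongr
    _ = _ := by ring

lemma inv_one_add_half_int_div_sq_le {A : ℝ} (hA : 0 < A) (n : ℤ) :
    (1 + ((n + 1 / 2 : ℝ) / A) ^ 2)⁻¹ ≤ A ^ 2 * (1 / |(n : ℝ) + 1 / 2| ^ (2 : ℝ)) := by
  have hn : (n : ℝ) + 1 / 2 ≠ 0 := by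
    intro h
    have : (2 * n + 1 : ℤ) = 0 := by
      have : (2 * n + 1 : ℝ) = 0 := by linarith
      exact_mod_cast this
    omega
  have hn' : 0 < ((n : ℝ) + 1 / 2) ^ 2 := by positivity
  rw [Real.rpow_two, sq_abs, mul_one_div, inv_le_comm₀ (by positivity) (by positivity), inv_div,
    div_pow]
  linarith

lemma summable_inv_one_add_half_int_div_sq {A : ℝ} (hA : 0 < A) :
    Summable fun n : ℤ ↦ (1 + ((n + 1 / 2 : ℝ) / A) ^ 2)⁻¹ :=
  (((Real.summable_one_div_int_add_rpow (1 / 2) 2).mpr one_lt_two).mul_left (A ^ 2)).of_nonneg_of_le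
    (fun _ ↦ by positivity) (inv_one_add_half_int_div_sq_le hA)

lemma tsum_inv_one_add_half_int_div_sq_le {A : ℝ} (hA : 0 < A) :
    ∑' n : ℤ, (1 + ((n + 1 / 2 : ℝ) / A) ^ 2)⁻¹ ≤
      A ^ 2 * ∑' n : ℤ, 1 / |(n : ℝ) + 1 / 2| ^ (2 : ℝ) := by
  rw [← tsum_mul_left]
  exact (summable_inv_one_add_half_int_div_sq hA).tsum_le_tsum (inv_one_add_half_int_div_sq_le hA)
    (((Real.summable_one_div_int_add_rpow (1 / 2) 2).mpr one_lt_two).mul_left (A ^ 2))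

lemma SchwartzMap.summable_half_int_prod (F : 𝓢(ℝ × ℝ, ℂ)) {A B : ℝ} (hA : 0 < A) (hB : 0 < B) :
    Summable fun p : ℤ × ℤ ↦ F ((p.1 + 1 / 2 : ℝ) / A, (p.2 + 1 / 2 : ℝ) / B) := by
  obtain ⟨C, -, h⟩ := F.exists_norm_le_mul_inv_one_add_sq
  refine .of_norm_bounded (((summable_inv_one_add_half_int_div_sq hA).mul_of_nonneg
    (summable_inv_one_add_half_int_div_sq hB) (fun _ ↦ ?_) fun _ ↦ ?_).mul_left C)
    fun p ↦ h _ _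
  all_goals simp only [Pi.zero_apply]; positivity

lemma integral_norm_le_of_le_mul_inv_one_add_sq {f : ℝ → ℂ} {c : ℝ}
    (h : ∀ t, ‖f t‖ ≤ c * (1 + t ^ 2)⁻¹) : ∫ t, ‖f t‖ ≤ c * Real.pi := by
  rw [← integral_univ_inv_one_add_sq, ← integral_const_mul]
  exact integral_mono_of_nonneg (.of_forall fun _ ↦ norm_nonneg _)
    (integrable_inv_one_add_sq.const_mul c) (.of_forall h)

lemma SchwartzMap.exists_norm_tsum_snd_sub_integral_le (F : 𝓢(ℝ × ℝ, ℂ)) {N : ℕ} (hN : 1 < N) :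
    ∃ C : ℝ, 0 ≤ C ∧ ∀ x B : ℝ, 0 < B →
      ‖∑' n : ℤ, F (x, (n + 1 / 2 : ℝ) / B) - B * ∫ y : ℝ, F (x, y)‖ ≤
        C * (B * B⁻¹ ^ N) * (1 + x ^ 2)⁻¹ := by
  have hv : ((0, 1) : ℝ × ℝ) ≠ 0 := by simp
  obtain ⟨C, hC, hG⟩ :=
    ((fun G : 𝓢(ℝ × ℝ, ℂ) ↦ ∂_{((0, 1) : ℝ × ℝ)} G)^[N] F).exists_norm_le_mul_inv_one_add_sq
  refine ⟨(∑' n : ℤ, |1 / (n : ℝ) ^ N|) * (C * Real.pi), by positivity, fun x B hB ↦ ?_⟩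
  have h := SchwartzMap.norm_tsum_line_sub_integral_le hN F (x, 0) hv hB
  simp only [Prod.smul_mk, smul_eq_mul, mul_zero, mul_one, Prod.mk_add_mk, add_zero, zero_add] at h
  refine h.trans ?_
  have h' := integral_norm_le_of_le_mul_inv_one_add_sq (c := C * (1 + x ^ 2)⁻¹)
    fun t ↦ (hG x t).trans_eq (by ring)
  refine (mul_le_mul_of_nonneg_left h' (by positivity)).trans_eq ?_
  ring

lemma SchwartzMap.exists_norm_tsum_fst_sub_integral_le (F : 𝓢(ℝ × ℝ, ℂ)) {N : ℕ} (hN : 1 < N) :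
    ∃ C : ℝ, 0 ≤ C ∧ ∀ y A : ℝ, 0 < A →
      ‖∑' n : ℤ, F ((n + 1 / 2 : ℝ) / A, y) - A * ∫ x : ℝ, F (x, y)‖ ≤
        C * (A * A⁻¹ ^ N) * (1 + y ^ 2)⁻¹ := by
  obtain ⟨C, hC, h⟩ := (SchwartzMap.compCLMOfContinuousLinearEquiv ℂ
    (ContinuousLinearEquiv.prodComm ℝ ℝ ℝ) F).exists_norm_tsum_snd_sub_integral_le hN
  exact ⟨C, hC, fun y A hA ↦ h y A hA⟩

lemma SchwartzMap.exists_norm_tsum_half_int_prod_sub_integral_le (F : 𝓢(ℝ × ℝ, ℂ)) {N : ℕ}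
    (hN : 1 < N) :
    ∃ C : ℝ, 0 ≤ C ∧ ∀ A B : ℝ, 0 < A → 0 < B →
      ‖∑' p : ℤ × ℤ, F ((p.1 + 1 / 2 : ℝ) / A, (p.2 + 1 / 2 : ℝ) / B) - A * B * ∫ z, F z‖ ≤
        C * (A ^ 2 * (B * B⁻¹ ^ N) + B * (A * A⁻¹ ^ N)) := by
  obtain ⟨C₀, hC₀, h₀⟩ := F.exists_norm_le_mul_inv_one_add_sq
  obtain ⟨C₁, hC₁, h₁⟩ := F.exists_norm_tsum_fst_sub_integral_le hN
  obtain ⟨C₂, hC₂, h₂⟩ := F.exists_norm_tsum_snd_sub_integral_le hN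
  set K := ∑' n : ℤ, 1 / |(n : ℝ) + 1 / 2| ^ (2 : ℝ)
  have hK : 0 ≤ K := tsum_nonneg fun _ ↦ by positivity
  refine ⟨C₂ * K + C₁ * Real.pi, by positivity, fun A B hA hB ↦ ?_⟩
  have hw := summable_inv_one_add_half_int_div_sq hA
  have hsum := F.summable_half_int_prod hA hB
  have hv : ((0, 1) : ℝ × ℝ) ≠ 0 := by simp
  have hint (x : ℝ) : Integrable fun y ↦ F (x, y) := by
    have h := (F.restrictLine (x, 0) hv).integrable (μ := volume)
    exact h.congr (.of_forall fun y ↦ by simp)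
  have hintle (x : ℝ) : ∫ y, ‖F (x, y)‖ ≤ C₀ * Real.pi * (1 + x ^ 2)⁻¹ :=
    (integral_norm_le_of_le_mul_inv_one_add_sq (c := C₀ * (1 + x ^ 2)⁻¹)
      fun t ↦ (h₀ x t).trans_eq (by ring)).trans_eq (by ring)
  have hnorm : Summable fun n : ℤ ↦ ∫ y, ‖F ((n + 1 / 2 : ℝ) / A, y)‖ :=
    (hw.mul_left _).of_nonneg_of_le (fun _ ↦ by positivity) fun n ↦ hintle _
  have hswap := hasSum_integral_of_summable_integral_norm
    (F := fun (n : ℤ) y ↦ F ((n + 1 / 2 : ℝ) / A, y)) (fun n ↦ hint _) hnorm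
  have hiter : Integrable fun y ↦ ∑' n : ℤ, F ((n + 1 / 2 : ℝ) / A, y) := by
    have hb (n : ℤ) (y : ℝ) : ‖F ((n + 1 / 2 : ℝ) / A, y)‖ ≤
        C₀ * (1 + y ^ 2)⁻¹ * (1 + ((n + 1 / 2 : ℝ) / A) ^ 2)⁻¹ := (h₀ _ y).trans_eq (by ring)
    refine ((integrable_inv_one_add_sq.const_mul C₀).mul_const
      (∑' n : ℤ, (1 + ((n + 1 / 2 : ℝ) / A) ^ 2)⁻¹)).mono' ?_ (.of_forall fun y ↦ ?_)
    · refine (continuous_tsum (fun n ↦ F.continuous.comp (by fun_prop)) (hw.mul_left C₀)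
        fun n y ↦ (hb n y).trans ?_).aestronglyMeasurable
      gcongr
      exact mul_le_of_le_one_right hC₀ (inv_le_one_of_one_le₀ (by nlinarith [sq_nonneg y]))
    · rw [← tsum_mul_left]
      exact tsum_of_norm_bounded (hw.mul_left _).hasSum fun n ↦ hb n y
  have hFint : Integrable F (volume.prod volume) := F.integrable
  have hfub : ∫ z, F z = ∫ y, ∫ x, F (x, y) := by
    rw [Measure.volume_eq_prod, integral_prod_symm _ hFint]
  have hs : Summable fun n : ℤ ↦ ∑' m : ℤ, F ((n + 1 / 2 : ℝ) / A, (m + 1 / 2 : ℝ) / B) := hsum.prod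
  have e₂ : ‖∑' p : ℤ × ℤ, F ((p.1 + 1 / 2 : ℝ) / A, (p.2 + 1 / 2 : ℝ) / B) -
      B * ∑' n : ℤ, ∫ y, F ((n + 1 / 2 : ℝ) / A, y)‖ ≤ C₂ * (B * B⁻¹ ^ N) * (A ^ 2 * K) := by
    rw [hsum.tsum_prod, ← tsum_mul_left, ← hs.tsum_sub (hswap.summable.mul_left _)]
    refine (tsum_of_norm_bounded (hw.mul_left _).hasSum fun n ↦ h₂ _ B hB).trans ?_
    rw [tsum_mul_left]
    gcongr
    exact tsum_inv_one_add_half_int_div_sq_le hA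
  have e₁ : ‖(∑' n : ℤ, ∫ y, F ((n + 1 / 2 : ℝ) / A, y)) - A * ∫ z, F z‖ ≤
      C₁ * (A * A⁻¹ ^ N) * Real.pi := by
    rw [hswap.tsum_eq, hfub, ← integral_const_mul, ← integral_sub hiter
      (hFint.integral_prod_right.const_mul _)]
    exact (norm_integral_le_integral_norm _).trans
      (integral_norm_le_of_le_mul_inv_one_add_sq fun y ↦ h₁ y A hA)
  calc _ = ‖(∑' p : ℤ × ℤ, F ((p.1 + 1 / 2 : ℝ) / A, (p.2 + 1 / 2 : ℝ) / B) -
      B * ∑' n : ℤ, ∫ y, F ((n + 1 / 2 : ℝ) / A, y)) +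
      B * ((∑' n : ℤ, ∫ y, F ((n + 1 / 2 : ℝ) / A, y)) - A * ∫ z, F z)‖ := by congr 1; ring
    _ ≤ C₂ * (B * B⁻¹ ^ N) * (A ^ 2 * K) + B * (C₁ * (A * A⁻¹ ^ N) * Real.pi) := by
      refine (norm_add_le _ _).trans (add_le_add e₂ ?_)
      rw [norm_mul, Complex.norm_real, Real.norm_of_nonneg hB.le]
      gcongr
    _ ≤ _ := by
      have := Real.pi_pos
      have p1 : 0 ≤ C₂ * K * (B * (A * A⁻¹ ^ N)) := by positivity
      have p2 : 0 ≤ C₁ * Real.pi * (A ^ 2 * (B * B⁻¹ ^ N)) := by positivity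
      nlinarith

lemma SchwartzMap.exists_norm_tsum_half_int_scaled_sub_integral_le (F : 𝓢(ℝ × ℝ, ℂ)) {N : ℕ}
    (hN : 1 < N) {a β : ℝ} (ha : 0 < a) (hβ : 0 < β) :
    ∃ C : ℝ, 0 ≤ C ∧ ∀ Λ : ℝ, 1 ≤ Λ →
      ‖∑' p : ℤ × ℤ, F ((p.1 + 1 / 2 : ℝ) / (Λ * a), (p.2 + 1 / 2 : ℝ) / (Λ * β)) -
        (Λ * a * (Λ * β) : ℝ) * ∫ z, F z‖ ≤ C * (Λ ^ 3 * Λ⁻¹ ^ N) := by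
  obtain ⟨C, hC, h⟩ := F.exists_norm_tsum_half_int_prod_sub_integral_le hN
  refine ⟨C * (a ^ 2 * (β * β⁻¹ ^ N) + β * (a * a⁻¹ ^ N)), by positivity, fun Λ hΛ ↦ ?_⟩
  have hΛ0 : 0 < Λ := by positivity
  have h' := h (Λ * a) (Λ * β) (by positivity) (by positivity)
  push_cast at h' ⊢
  refine h'.trans ?_
  rw [mul_assoc C]
  gcongr
  have h23 : Λ ^ 2 ≤ Λ ^ 3 := pow_le_pow_right₀ hΛ (by norm_num)
  simp only [mul_inv, mul_pow]
  have : β * (a * a⁻¹ ^ N) * Λ⁻¹ ^ N * Λ ^ 2 ≤ β * (a * a⁻¹ ^ N) * Λ⁻¹ ^ N * Λ ^ 3 := by gcongr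
  linarith

lemma exists_schwartzMap_apply_sq_add_sq (h : 𝓢(ℝ, ℝ)) :
    ∃ F : 𝓢(ℝ × ℝ, ℂ), ∀ x y : ℝ, F (x, y) = h (x ^ 2 + y ^ 2) := by
  have hg : (fun z : ℝ × ℝ ↦ z.1 ^ 2 + z.2 ^ 2).HasTemperateGrowth := by
    have h1 : (fun z : ℝ × ℝ ↦ z.1).HasTemperateGrowth :=
      (ContinuousLinearMap.fst ℝ ℝ ℝ).hasTemperateGrowth
    have h2 : (fun z : ℝ × ℝ ↦ z.2).HasTemperateGrowth :=
      (ContinuousLinearMap.snd ℝ ℝ ℝ).hasTemperateGrowth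
    exact (h1.pow 2).add (h2.pow 2)
  refine ⟨SchwartzMap.compCLM ℝ hg ⟨1, 1, fun z ↦ ?_⟩ (h.postcompCLM Complex.ofRealCLM),
    fun x y ↦ rfl⟩
  rw [Real.norm_of_nonneg (by positivity), pow_one, one_mul, Prod.norm_def]
  refine max_le (abs_le.mpr ⟨?_, ?_⟩) (abs_le.mpr ⟨?_, ?_⟩) <;>
    nlinarith [sq_nonneg (z.1 - 1), sq_nonneg (z.1 + 1), sq_nonneg (z.2 - 1), sq_nonneg (z.2 + 1)]

lemma SchwartzMap.exists_fst_sq_mul (F : 𝓢(ℝ × ℝ, ℂ)) :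
    ∃ G : 𝓢(ℝ × ℝ, ℂ), ∀ x y : ℝ, G (x, y) = x ^ 2 * F (x, y) := by
  have h1 : (fun z : ℝ × ℝ ↦ z.1 ^ 2).HasTemperateGrowth :=
    (ContinuousLinearMap.fst ℝ ℝ ℝ).hasTemperateGrowth.pow 2
  refine ⟨SchwartzMap.smulLeftCLM ℂ (fun z : ℝ × ℝ ↦ z.1 ^ 2) F, fun x y ↦ ?_⟩
  rw [SchwartzMap.smulLeftCLM_apply_apply h1]
  simp

lemma integral_comp_sq_add_sq (f : ℝ → ℝ) :
    ∫ z : ℝ × ℝ, f (z.1 ^ 2 + z.2 ^ 2) =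
      2 * Real.pi * ∫ ρ in Set.Ioi (0 : ℝ), f (ρ ^ 2) * ρ := by
  rw [← integral_comp_polarCoord_symm, polarCoord_target]
  have h (p : ℝ × ℝ) : p.1 • f ((polarCoord.symm p).1 ^ 2 + (polarCoord.symm p).2 ^ 2) =
      (f (p.1 ^ 2) * p.1) * 1 := by
    rw [polarCoord_symm_apply, mul_pow, mul_pow, ← mul_add, Real.cos_sq_add_sin_sq, smul_eq_mul]
    ring_nf
  simp_rw [h]
  rw [Measure.volume_eq_prod, setIntegral_prod_mul (fun r ↦ f (r ^ 2) * r) (fun _ ↦ (1 : ℝ))]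
  simp [Real.pi_pos.le]
  ring

lemma integral_fst_sq_mul_comp_sq_add_sq (f : ℝ → ℝ) :
    ∫ z : ℝ × ℝ, z.1 ^ 2 * f (z.1 ^ 2 + z.2 ^ 2) =
      Real.pi * ∫ ρ in Set.Ioi (0 : ℝ), f (ρ ^ 2) * ρ ^ 3 := by
  rw [← integral_comp_polarCoord_symm, polarCoord_target]
  have h (p : ℝ × ℝ) : p.1 • ((polarCoord.symm p).1 ^ 2 *
      f ((polarCoord.symm p).1 ^ 2 + (polarCoord.symm p).2 ^ 2)) =
      (f (p.1 ^ 2) * p.1 ^ 3) * Real.cos p.2 ^ 2 := by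
    rw [polarCoord_symm_apply, mul_pow, mul_pow, ← mul_add, Real.cos_sq_add_sin_sq, smul_eq_mul]
    ring_nf
  simp_rw [h]
  rw [Measure.volume_eq_prod,
    setIntegral_prod_mul (fun r ↦ f (r ^ 2) * r ^ 3) (fun θ ↦ Real.cos θ ^ 2),
    ← integral_Ioc_eq_integral_Ioo,
    ← intervalIntegral.integral_of_le (by linarith [Real.pi_pos]), integral_cos_sq]
  simp
  ring

/-- Spectral action on `S³_a × S¹_β`: for a Schwartz function `h` and every
`k > 0`, `Tr(h(D²/Λ²)) = 2πΛ⁴βa³ ∫_0^∞ h(ρ²)ρ³ dρ - πΛ²βa ∫_0^∞ h(ρ²)ρ dρ + O(Λ^{-k})`. -/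
theorem spectral_action_S3xS1 (h : SchwartzMap ℝ ℝ) (a β : ℝ)
    (ha : 0 < a) (hβ : 0 < β) (k : ℝ) (hk : 0 < k) :
    ∃ C : ℝ, ∀ Λ : ℝ, 1 ≤ Λ →
      |(∑' p : ℤ × ℤ, 2 * (p.1 : ℝ) * ((p.1 : ℝ) + 1) *
            h (((p.1 : ℝ) + 1 / 2) ^ 2 * (Λ * a) ^ (-2 : ℤ)
                + ((p.2 : ℝ) + 1 / 2) ^ 2 * (Λ * β) ^ (-2 : ℤ)))
          - (2 * Real.pi * Λ ^ 4 * β * a ^ 3 * (∫ ρ in Set.Ioi (0 : ℝ), h (ρ ^ 2) * ρ ^ 3)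
              - Real.pi * Λ ^ 2 * β * a * (∫ ρ in Set.Ioi (0 : ℝ), h (ρ ^ 2) * ρ))| ≤
        C * Λ ^ (-k) := by
  obtain ⟨F, hF⟩ := exists_schwartzMap_apply_sq_add_sq h
  obtain ⟨G, hG⟩ := F.exists_fst_sq_mul
  obtain ⟨C₀, hC₀, h₀⟩ := F.exists_norm_tsum_half_int_scaled_sub_integral_le
    (N := ⌈k⌉₊ + 5) (by omega) ha hβ
  obtain ⟨C₁, hC₁, h₁⟩ := G.exists_norm_tsum_half_int_scaled_sub_integral_le
    (N := ⌈k⌉₊ + 5) (by omega) ha hβ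
  have hFI : ∫ z, F z = ((2 * Real.pi * ∫ ρ in Set.Ioi (0 : ℝ), h (ρ ^ 2) * ρ : ℝ) : ℂ) := by
    rw [← integral_comp_sq_add_sq, ← integral_complex_ofReal]
    exact integral_congr_ae (.of_forall fun z ↦ hF z.1 z.2)
  have hGI : ∫ z, G z = ((Real.pi * ∫ ρ in Set.Ioi (0 : ℝ), h (ρ ^ 2) * ρ ^ 3 : ℝ) : ℂ) := by
    rw [← integral_fst_sq_mul_comp_sq_add_sq, ← integral_complex_ofReal]
    exact integral_congr_ae (.of_forall fun z ↦ by simp [hG z.1 z.2, hF])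
  refine ⟨2 * a ^ 2 * C₁ + 1 / 2 * C₀, fun Λ hΛ ↦ ?_⟩
  have hΛ0 : 0 < Λ := by positivity
  have hterm (p : ℤ × ℤ) : ((2 * (p.1 : ℝ) * ((p.1 : ℝ) + 1) *
      h (((p.1 : ℝ) + 1 / 2) ^ 2 * (Λ * a) ^ (-2 : ℤ)
        + ((p.2 : ℝ) + 1 / 2) ^ 2 * (Λ * β) ^ (-2 : ℤ)) : ℝ) : ℂ) =
      2 * Λ ^ 2 * a ^ 2 * G ((p.1 + 1 / 2 : ℝ) / (Λ * a), (p.2 + 1 / 2 : ℝ) / (Λ * β)) -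
        1 / 2 * F ((p.1 + 1 / 2 : ℝ) / (Λ * a), (p.2 + 1 / 2 : ℝ) / (Λ * β)) := by
    have harg : ((p.1 : ℝ) + 1 / 2) ^ 2 * (Λ * a) ^ (-2 : ℤ)
        + ((p.2 : ℝ) + 1 / 2) ^ 2 * (Λ * β) ^ (-2 : ℤ) =
        ((p.1 + 1 / 2 : ℝ) / (Λ * a)) ^ 2 + ((p.2 + 1 / 2 : ℝ) / (Λ * β)) ^ 2 := by
      rw [div_pow, div_pow, div_eq_mul_inv, div_eq_mul_inv, zpow_neg, zpow_neg]
      norm_cast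
    rw [hG, hF, harg]
    have hΛc : (Λ : ℂ) ≠ 0 := by exact_mod_cast hΛ0.ne'
    have hac : (a : ℂ) ≠ 0 := by exact_mod_cast ha.ne'
    push_cast
    field_simp
    ring
  have hsF := F.summable_half_int_prod (A := Λ * a) (B := Λ * β) (by positivity) (by positivity)
  have hsG := G.summable_half_int_prod (A := Λ * a) (B := Λ * β) (by positivity) (by positivity)
  rw [← Real.norm_eq_abs, ← Complex.norm_real, Complex.ofReal_sub, Complex.ofReal_tsum]
  simp_rw [hterm]
  rw [(hsG.mul_left _).tsum_sub (hsF.mul_left _), tsum_mul_left, tsum_mul_left]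
  have e₀ := h₀ Λ hΛ
  have e₁ := h₁ Λ hΛ
  rw [hFI] at e₀
  rw [hGI] at e₁
  have hdecay : Λ ^ 5 * Λ⁻¹ ^ (⌈k⌉₊ + 5) ≤ Λ ^ (-k) := by
    rw [pow_add, mul_left_comm, ← mul_pow, mul_inv_cancel₀ hΛ0.ne', one_pow, mul_one, inv_pow,
      ← Real.rpow_natCast, ← Real.rpow_neg hΛ0.le]
    exact Real.rpow_le_rpow_of_exponent_le hΛ (neg_le_neg (Nat.le_ceil k))
  have h35 : Λ ^ 3 ≤ Λ ^ 5 := pow_le_pow_right₀ hΛ (by norm_num)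
  set SF := ∑' p : ℤ × ℤ, F ((p.1 + 1 / 2 : ℝ) / (Λ * a), (p.2 + 1 / 2 : ℝ) / (Λ * β))
  set SG := ∑' p : ℤ × ℤ, G ((p.1 + 1 / 2 : ℝ) / (Λ * a), (p.2 + 1 / 2 : ℝ) / (Λ * β))
  set I₁ := ∫ ρ in Set.Ioi (0 : ℝ), h (ρ ^ 2) * ρ
  set I₃ := ∫ ρ in Set.Ioi (0 : ℝ), h (ρ ^ 2) * ρ ^ 3
  calc _ = ‖((2 * Λ ^ 2 * a ^ 2 : ℝ) : ℂ) *
        (SG - (Λ * a * (Λ * β) : ℝ) * ((Real.pi * I₃ : ℝ) : ℂ)) -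
        ((1 / 2 : ℝ) : ℂ) * (SF - (Λ * a * (Λ * β) : ℝ) * ((2 * Real.pi * I₁ : ℝ) : ℂ))‖ := by
        congr 1
        push_cast
        ring
    _ ≤ 2 * Λ ^ 2 * a ^ 2 * (C₁ * (Λ ^ 3 * Λ⁻¹ ^ (⌈k⌉₊ + 5))) +
        1 / 2 * (C₀ * (Λ ^ 3 * Λ⁻¹ ^ (⌈k⌉₊ + 5))) := by
      refine (norm_sub_le _ _).trans ?_
      rw [norm_mul, norm_mul, Complex.norm_real, Complex.norm_real,
        Real.norm_of_nonneg (by positivity), Real.norm_of_nonneg (by positivity)]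
      gcongr
    _ ≤ 2 * a ^ 2 * C₁ * (Λ ^ 5 * Λ⁻¹ ^ (⌈k⌉₊ + 5)) +
        1 / 2 * C₀ * (Λ ^ 5 * Λ⁻¹ ^ (⌈k⌉₊ + 5)) := by
      refine add_le_add (le_of_eq (by ring)) ?_
      rw [← mul_assoc (1 / 2 : ℝ) C₀]
      gcongr
    _ = (2 * a ^ 2 * C₁ + 1 / 2 * C₀) * (Λ ^ 5 * Λ⁻¹ ^ (⌈k⌉₊ + 5)) := by ring
    _ ≤ _ := by gcongr
end
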